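/- Let X and Y be independent standard Gaussian vectors (on ℝ^{n₁} and ℝ^{n₂} respectively), let p(X,Y) and q(X,Y) be polynomials of degree at most d in the coordinates of (X,Y), and let ε > 0. Then Pr_Y( |p(X,Y)|_{2,X} < ε · |q(X,Y)|_{2,X} ) ≤ 4 · 9^d · Pr_{X,Y}( |p(X,Y)| < 4 · 3^d · ε · |q(X,Y)| ). -/

import Mathlib

open MeasureTheory ProbabilityTheory

/-- The standard Gaussian measure on `ℝ^n`. -/
noncomputable def stdGaussian (n : ℕ) : Measure (Fin n → ℝ) :=
  Measure.pi fun _ => gaussianReal 0 1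

/-- `N_Y^θ(X) = cos θ · X + sin θ · Y`. -/
noncomputable def noisy {n : ℕ} (θ : ℝ) (Y X : Fin n → ℝ) : Fin n → ℝ :=
  Real.cos θ • X + Real.sin θ • Y

/-- The noisy derivative `D_{Y,Z}^θ f (X)`. -/
noncomputable def noisyDeriv {n : ℕ} (θ : ℝ) (Y Z : Fin n → ℝ)
    (f : (Fin n → ℝ) → ℝ) (X : Fin n → ℝ) : ℝ :=
  (f (noisy θ Y X) - f (noisy θ Z X)) / θ

/-- `|f_θ^{(ℓ)}(X)|₂²`, the mean square of the `ℓ`-fold noisy derivative over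
independent standard Gaussian directions. -/
noncomputable def derivNormSq (n : ℕ) (θ : ℝ) : ℕ → ((Fin n → ℝ) → ℝ) → (Fin n → ℝ) → ℝ
  | 0, f, X => (f X) ^ 2
  | (ℓ+1), f, X =>
      ∫ YZ : (Fin n → ℝ) × (Fin n → ℝ),
        derivNormSq n θ ℓ (noisyDeriv θ YZ.1 YZ.2 f) X
        ∂((stdGaussian n).prod (stdGaussian n))

/-- The averaging operator `A^θ f (X) = E_Y[f(N_Y^θ(X))]`. -/
noncomputable def avgOp (n : ℕ) (θ : ℝ) (f : (Fin n → ℝ) → ℝ) (X : Fin n → ℝ) : ℝ :=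
  ∫ Y, f (noisy θ Y X) ∂(stdGaussian n)

/-- `q_{ℓ,m}(X) = |p_θ^{(ℓ),m}(X)|₂² = (A^θ)^m |p_θ^{(ℓ)}(X)|₂²`. -/
noncomputable def qlm (n : ℕ) (θ : ℝ) (p : MvPolynomial (Fin n) ℝ) (ℓ m : ℕ)
    (X : Fin n → ℝ) : ℝ :=
  (avgOp n θ)^[m] (derivNormSq n θ ℓ (fun W => MvPolynomial.eval W p)) X

/-- The Gaussian `L^k` norm of a function on `ℝ^n`. -/
noncomputable def gaussNorm (n : ℕ) (k : ℝ) (p : (Fin n → ℝ) → ℝ) : ℝ :=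
  (∫ X, |p X| ^ k ∂(stdGaussian n)) ^ (1 / k)

/-- `f` is a degree-`d` polynomial threshold function on `ℝ^n`. -/
def isPTF (n d : ℕ) (f : (Fin n → ℝ) → ℝ) : Prop :=
  ∃ p : MvPolynomial (Fin n) ℝ, p.totalDegree ≤ d ∧
    ∀ x, f x = Real.sign (MvPolynomial.eval x p)

/-- `X` is a `k`-independent family of standard Gaussians: any `m ≤ k` distinct
coordinates are jointly distributed as `m` independent standard Gaussians. -/
def kIndepGaussian {Ω : Type} [MeasurableSpace Ω] (n k : ℕ) (P : Measure Ω)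
    (X : Ω → (Fin n → ℝ)) : Prop :=
  ∀ m : ℕ, m ≤ k → ∀ ι : Fin m → Fin n, Function.Injective ι →
    Measure.map (fun ω i => X ω (ι i)) P = Measure.pi fun _ : Fin m => gaussianReal 0 1

/-- Partial `L²` norm over `X` of a polynomial in `(X, Y)`. -/
noncomputable def partialL2 (n₁ n₂ : ℕ) (r : MvPolynomial (Fin n₁ ⊕ Fin n₂) ℝ)
    (Y : Fin n₂ → ℝ) : ℝ :=
  Real.sqrt (∫ X, (MvPolynomial.eval (Sum.elim X Y) r) ^ 2 ∂(stdGaussian n₁))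

/-!
Let `N` be the number operator and split `p = ∑ pₖ` into its Wiener chaos components, so that
`N pₖ = k pₖ`. The Ornstein–Uhlenbeck flow `pₛ = ∑ sᵏ pₖ` satisfies `s · dpₛ/ds = N pₛ`, and
Gaussian integration by parts gives `𝔼[pₛ³ · N pₛ] = 3 ∑ᵢ 𝔼[pₛ² (∂ᵢpₛ)²]`. The `∂ᵢpₛ` have smaller
degree, so Cauchy–Schwarz and induction on `d` bound `d/ds √𝔼[pₛ⁴]` by `3ᵈ · d/ds 𝔼[pₛ²]`.
Integrating from the constant `p₀` to `p₁ = p` gives the hypercontractive bound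
`√𝔼[p⁴] ≤ 3ᵈ 𝔼[p²]`.

Fix now a `Y` for which `|p|_{2,X} < ε |q|_{2,X}`. Where `|p| ≥ κε|q|` with `κ² ≥ 2`, the polynomial
`q` carries at most half of its second moment; by Cauchy–Schwarz and the bound on `𝔼[q⁴]`, the
complementary event has probability at least `1 / (4 · 9ᵈ)` in `X`. Markov's inequality in `Y`
concludes.
-/

open MvPolynomial
open scoped NNReal

variable {σ : Type*}

lemma integrable_gaussianPDFReal_mul {m : ℝ} {v : ℝ≥0} (hv : v ≠ 0) {f : ℝ → ℝ}
    (hf : Integrable f (gaussianReal m v)) :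
    Integrable (fun x => gaussianPDFReal m v x * f x) := by
  rw [gaussianReal_of_var_ne_zero _ hv, integrable_withDensity_iff_integrable_smul'
    (measurable_gaussianPDF _ _) (ae_of_all _ fun _ => gaussianPDF_lt_top)] at hf
  simpa only [toReal_gaussianPDF, smul_eq_mul] using hf

lemma hasDerivAt_gaussianPDFReal (m : ℝ) {v : ℝ≥0} (hv : v ≠ 0) (x : ℝ) :
    HasDerivAt (gaussianPDFReal m v) (-((x - m) / v) * gaussianPDFReal m v x) x := by
  have hexponent : HasDerivAt (fun y => -(y - m) ^ 2 / (2 * v)) (-((x - m) / v)) x := by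
    refine ((((hasDerivAt_id' x).sub_const m).pow 2).neg.div_const _).congr_deriv ?_
    field_simp
    ring
  refine (hexponent.exp.const_mul _).congr_deriv ?_
  rw [gaussianPDFReal_def]
  ring

theorem integral_sub_mul_gaussianReal {m : ℝ} {v : ℝ≥0} {f f' : ℝ → ℝ}
    (hderiv : ∀ x, HasDerivAt f (f' x) x) (hf : Integrable f (gaussianReal m v))
    (hf' : Integrable f' (gaussianReal m v))
    (hxf : Integrable (fun x => (x - m) * f x) (gaussianReal m v)) :
    ∫ x, (x - m) * f x ∂gaussianReal m v = v * ∫ x, f' x ∂gaussianReal m v := by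
  rcases eq_or_ne v 0 with rfl | hv
  · simp
  have hzero := integral_eq_zero_of_hasDerivAt_of_integrable
    (fun x => (hasDerivAt_gaussianPDFReal m hv x).mul (hderiv x))
    (((integrable_gaussianPDFReal_mul hv (hf'.sub (hxf.div_const (v : ℝ)))).congr
      (ae_of_all _ fun x => ?_)))
    (integrable_gaussianPDFReal_mul hv hf)
  · have hsub : ∫ x, (f' x - (x - m) * f x / v) ∂gaussianReal m v = 0 := by
      rw [integral_gaussianReal_eq_integral_smul hv, ← hzero]
      congr 1 with x
      simp only [smul_eq_mul]
      ring
    rw [integral_sub hf' (hxf.div_const _), integral_div, sub_eq_zero] at hsub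
    rw [hsub]
    field_simp
  · simp only [Pi.sub_apply]
    ring

lemma integrable_pow_gaussianReal (m : ℝ) (v : ℝ≥0) (k : ℕ) :
    Integrable (fun x => x ^ k) (gaussianReal m v) := by
  simpa using ((memLp_id_gaussianReal (μ := m) (v := v) k).integrable_norm_pow').mono'
    (by fun_prop) (by simp)

lemma integral_mul_pow_gaussianReal (k : ℕ) :
    ∫ x, x * x ^ k ∂gaussianReal 0 1 = k * ∫ x, x ^ (k - 1) ∂gaussianReal 0 1 := by
  have hstein := integral_sub_mul_gaussianReal (m := 0) (v := 1) (fun x => hasDerivAt_pow k x)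
    (integrable_pow_gaussianReal _ _ k) ((integrable_pow_gaussianReal _ _ _).const_mul _)
    (by simpa only [sub_zero, ← pow_succ'] using integrable_pow_gaussianReal 0 1 (k + 1))
  simpa only [sub_zero, NNReal.coe_one, one_mul, integral_const_mul] using hstein

lemma measurable_eval (p : MvPolynomial σ ℝ) : Measurable fun x => eval x p := by
  induction p using MvPolynomial.induction_on with
  | C a => simp
  | add p q hp hq => simp only [map_add]; exact hp.add hq
  | mul_X p i hp => simp only [map_mul, eval_X]; exact hp.mul (measurable_pi_apply i)

variable [Fintype σ]

/-- The standard Gaussian measure on `σ → ℝ`, for an arbitrary finite index type; `stdGaussian n`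
is the case `σ = Fin n`. -/
noncomputable abbrev gaussianPi (σ : Type*) [Fintype σ] : Measure (σ → ℝ) :=
  Measure.pi fun _ => gaussianReal 0 1

lemma integrable_eval_gaussianPi (p : MvPolynomial σ ℝ) :
    Integrable (fun x => eval x p) (gaussianPi σ) := by
  induction p using MvPolynomial.induction_on' with
  | monomial s c =>
    simp only [eval_monomial, Finsupp.prod_fintype _ _ fun _ => pow_zero _]
    exact (Integrable.fintype_prod fun i => integrable_pow_gaussianReal 0 1 (s i)).const_mul c
  | add p q hp hq => simp only [map_add]; exact hp.add hq

/-- The expectation `p ↦ 𝔼[p(X)]` of a polynomial in independent standard Gaussians `X`, as a linear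
functional, so that Gaussian integration by parts becomes polynomial algebra. -/
noncomputable def gaussianExpect (σ : Type*) [Fintype σ] : MvPolynomial σ ℝ →ₗ[ℝ] ℝ where
  toFun p := ∫ x, eval x p ∂gaussianPi σ
  map_add' p q := by
    simpa only [map_add] using
      integral_add (integrable_eval_gaussianPi p) (integrable_eval_gaussianPi q)
  map_smul' c p := by
    simp only [smul_eval, integral_const_mul, RingHom.id_apply, smul_eq_mul]

lemma gaussianExpect_apply (p : MvPolynomial σ ℝ) :
    gaussianExpect σ p = ∫ x, eval x p ∂gaussianPi σ := rfl

lemma gaussianExpect_monomial (s : σ →₀ ℕ) (c : ℝ) :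
    gaussianExpect σ (monomial s c) = c * ∏ i, ∫ x, x ^ s i ∂gaussianReal 0 1 := by
  simp only [gaussianExpect_apply, eval_monomial, Finsupp.prod_fintype _ _ fun _ => pow_zero _,
    integral_const_mul]
  rw [integral_fintype_prod_eq_prod (fun i x => x ^ s i)]

lemma gaussianExpect_C (c : ℝ) : gaussianExpect σ (C c) = c := by
  simp [gaussianExpect_apply]

theorem gaussianExpect_X_mul (i : σ) (p : MvPolynomial σ ℝ) :
    gaussianExpect σ (X i * p) = gaussianExpect σ (pderiv i p) := by
  classical
  induction p using MvPolynomial.induction_on' with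
  | monomial s c =>
    have hrest (t : σ →₀ ℕ) (ht : ∀ j, j ≠ i → t j = s j) :
        ∏ j ∈ {i}ᶜ, ∫ x, x ^ t j ∂gaussianReal 0 1 = ∏ j ∈ {i}ᶜ, ∫ x, x ^ s j ∂gaussianReal 0 1 :=
      Finset.prod_congr rfl fun j hj => by rw [ht j (by simpa using hj)]
    rw [X, monomial_mul, one_mul, pderiv_monomial, gaussianExpect_monomial, gaussianExpect_monomial,
      Fintype.prod_eq_mul_prod_compl i, Fintype.prod_eq_mul_prod_compl i,
      hrest (Finsupp.single i 1 + s) fun j hj => by simp [hj],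
      hrest (s - Finsupp.single i 1) fun j hj => by simp [hj]]
    simp only [Finsupp.add_apply, Finsupp.single_eq_same, Finsupp.tsub_apply, add_comm 1, pow_succ',
      integral_mul_pow_gaussianReal]
    ring
  | add p q hp hq => simp only [mul_add, map_add, hp, hq]

lemma coeff_X_mul_pderiv {σ R : Type*} [CommSemiring R] (i : σ) (p : MvPolynomial σ R)
    (m : σ →₀ ℕ) : coeff m (X i * pderiv i p) = m i * coeff m p := by
  classical
  induction p using MvPolynomial.induction_on' with
  | monomial s c =>
    rw [X_mul_pderiv_monomial, coeff_smul, coeff_monomial, nsmul_eq_mul]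
    split_ifs with h <;> simp [h]
  | add p q hp hq => simp only [map_add, mul_add, coeff_add, hp, hq]

lemma totalDegree_pderiv_le {σ R : Type*} [CommSemiring R] (i : σ) (p : MvPolynomial σ R) :
    (pderiv i p).totalDegree ≤ p.totalDegree - 1 := by
  classical
  refine Finset.sup_le fun m hm => ?_
  rw [mem_support_iff, coeff_pderiv] at hm
  have hle := le_totalDegree (mem_support_iff.2 (left_ne_zero_of_mul hm))
  rw [Finsupp.sum_add_index' (by simp) (by simp), Finsupp.sum_single_index rfl] at hle
  exact Nat.le_sub_of_add_le hle

/-- The number operator (minus the Ornstein–Uhlenbeck generator) on polynomials: its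
`k`-eigenspace consists of the polynomials spanned by Hermite polynomials of degree `k`. -/
noncomputable def numberOp (σ : Type*) [Fintype σ] : Module.End ℝ (MvPolynomial σ ℝ) :=
  ∑ i, (LinearMap.mulLeft ℝ (X i) ∘ₗ (pderiv i).toLinearMap
    - (pderiv i).toLinearMap ∘ₗ (pderiv i).toLinearMap)

lemma numberOp_apply (p : MvPolynomial σ ℝ) :
    numberOp σ p = ∑ i, (X i * pderiv i p - pderiv i (pderiv i p)) := by
  simp [numberOp]

theorem gaussianExpect_mul_numberOp (p q : MvPolynomial σ ℝ) :
    gaussianExpect σ (q * numberOp σ p) = ∑ i, gaussianExpect σ (pderiv i q * pderiv i p) := by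
  simp only [numberOp_apply, Finset.mul_sum, map_sum]
  refine Finset.sum_congr rfl fun i _ => ?_
  rw [mul_sub, mul_left_comm, map_sub, gaussianExpect_X_mul, pderiv_mul, map_add,
    add_sub_cancel_right]

lemma totalDegree_numberOp_sub_smul_le {p : MvPolynomial σ ℝ} {d : ℕ} (hp : p.totalDegree ≤ d) :
    (numberOp σ p - (d : ℝ) • p).totalDegree ≤ d - 1 := by
  refine Finset.sup_le fun m hm => ?_
  by_contra! hlt
  refine mem_support_iff.1 hm ?_
  have hpderiv (i : σ) : coeff m (pderiv i (pderiv i p)) = 0 := by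
    refine coeff_eq_zero_of_totalDegree_lt (lt_of_le_of_lt ?_ hlt)
    have := totalDegree_pderiv_le i p
    have := totalDegree_pderiv_le i (pderiv i p)
    omega
  have hsum : ∑ i, m i = m.sum fun _ e => e := by rw [Finsupp.sum_fintype _ _ fun _ => rfl]
  simp only [numberOp_apply, coeff_sub, coeff_sum, coeff_X_mul_pderiv, hpderiv, sub_zero,
    coeff_smul, smul_eq_mul]
  rw [← Finset.sum_mul, ← sub_mul, ← Nat.cast_sum, hsum, mul_eq_zero, sub_eq_zero, Nat.cast_inj]
  by_cases hm : coeff m p = 0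
  · exact Or.inr hm
  · have := le_totalDegree (mem_support_iff.2 hm)
    left
    omega

/-- The `k`-th Wiener chaos: polynomials of degree at most `k` that are eigenvectors of the number
operator with eigenvalue `k`. -/
noncomputable def chaos (σ : Type*) [Fintype σ] (k : ℕ) : Submodule ℝ (MvPolynomial σ ℝ) :=
  restrictTotalDegree σ ℝ k ⊓ Module.End.eigenspace (numberOp σ) (k : ℝ)

lemma mem_chaos {p : MvPolynomial σ ℝ} {k : ℕ} :
    p ∈ chaos σ k ↔ p.totalDegree ≤ k ∧ numberOp σ p = (k : ℝ) • p := by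
  rw [chaos, Submodule.mem_inf, mem_restrictTotalDegree, Module.End.mem_eigenspace_iff]

lemma numberOp_inv_smul_sub_smul {c : MvPolynomial σ ℝ} {k d : ℕ} (hc : c ∈ chaos σ k)
    (hkd : k ≠ d) :
    numberOp σ (((k : ℝ) - d)⁻¹ • c) - (d : ℝ) • (((k : ℝ) - d)⁻¹ • c) = c := by
  rw [map_smul, (mem_chaos.1 hc).2, smul_comm _ (k : ℝ), ← sub_smul,
    smul_inv_smul₀ (sub_ne_zero.2 (Nat.cast_injective.ne hkd))]

theorem exists_sum_chaos {p : MvPolynomial σ ℝ} {d : ℕ} (hp : p.totalDegree ≤ d) :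
    ∃ c : ℕ → MvPolynomial σ ℝ, (∀ k, c k ∈ chaos σ k) ∧ ∑ k ∈ Finset.range (d + 1), c k = p := by
  induction d generalizing p with
  | zero =>
    rw [Nat.le_zero, totalDegree_eq_zero_iff_eq_C] at hp
    refine ⟨Pi.single 0 p, fun k => ?_, by simp⟩
    rcases eq_or_ne k 0 with rfl | hk
    · rw [Pi.single_eq_same, hp]
      simp [mem_chaos, numberOp_apply]
    · simp [hk]
  | succ d ih =>
    -- `N - (d + 1)` lowers the degree of `p` and is invertible on the chaoses of order at most `d`;
    -- inverting it there leaves a remainder in the kernel of `N - (d + 1)`.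
    obtain ⟨c, hc, hsum⟩ := ih (totalDegree_numberOp_sub_smul_le hp)
    set b : ℕ → MvPolynomial σ ℝ := fun k => ((k : ℝ) - (d + 1 : ℕ))⁻¹ • c k
    have hb (k : ℕ) : b k ∈ chaos σ k := Submodule.smul_mem _ _ (hc k)
    have hbc (k : ℕ) (hk : k ∈ Finset.range (d + 1)) :
        numberOp σ (b k) - ((d + 1 : ℕ) : ℝ) • b k = c k :=
      numberOp_inv_smul_sub_smul (hc k) (Finset.mem_range.1 hk).ne
    set top := p - ∑ k ∈ Finset.range (d + 1), b k
    have htop : top ∈ chaos σ (d + 1) := by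
      refine mem_chaos.2 ⟨?_, ?_⟩
      · rw [← mem_restrictTotalDegree] at hp ⊢
        refine sub_mem hp (sum_mem fun k hk => ?_)
        rw [mem_restrictTotalDegree]
        exact (mem_chaos.1 (hb k)).1.trans (Finset.mem_range.1 hk).le
      · rw [← sub_eq_zero]
        calc numberOp σ top - ((d + 1 : ℕ) : ℝ) • top
            = (numberOp σ p - ((d + 1 : ℕ) : ℝ) • p)
              - ∑ k ∈ Finset.range (d + 1), (numberOp σ (b k) - ((d + 1 : ℕ) : ℝ) • b k) := by
              simp only [top, map_sub, map_sum, smul_sub, Finset.smul_sum, Finset.sum_sub_distrib]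
              abel
          _ = 0 := by rw [Finset.sum_congr rfl hbc, hsum, sub_self]
    refine ⟨Function.update b (d + 1) top, fun k => ?_, ?_⟩
    · rcases eq_or_ne k (d + 1) with rfl | hk
      · rwa [Function.update_self]
      · rw [Function.update_of_ne hk]
        exact hb k
    · rw [Finset.sum_range_succ, Function.update_self, Finset.sum_update_of_notMem (by simp),
        add_sub_cancel]

lemma hasDerivAt_map_polynomial_eval {A : Type*} [CommRing A] [Algebra ℝ A] (L : A →ₗ[ℝ] ℝ)
    (F : Polynomial A) (s : ℝ) :
    HasDerivAt (fun t => L (F.eval (algebraMap ℝ A t)))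
      (L (F.derivative.eval (algebraMap ℝ A s))) s := by
  induction F using Polynomial.induction_on' with
  | add F G hF hG =>
    simp only [map_add, Polynomial.eval_add]
    exact hF.add hG
  | monomial n a =>
    have hmonomial (t : ℝ) (m : ℕ) (a : A) : L (a * algebraMap ℝ A t ^ m) = t ^ m * L a := by
      rw [← map_pow, mul_comm, ← Algebra.smul_def, map_smul, smul_eq_mul]
    simp only [Polynomial.derivative_monomial, Polynomial.eval_monomial, hmonomial]
    rw [← nsmul_eq_mul', map_nsmul, nsmul_eq_mul, ← mul_assoc, mul_comm _ (n : ℝ)]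
    exact (hasDerivAt_pow n s).mul_const (L a)

lemma hasDerivAt_gaussianExpect_eval_pow (F : Polynomial (MvPolynomial σ ℝ)) (n : ℕ) (s : ℝ) :
    HasDerivAt (fun t => gaussianExpect σ (F.eval (C t) ^ n))
      (n * gaussianExpect σ (F.eval (C s) ^ (n - 1) * F.derivative.eval (C s))) s := by
  have hderiv := hasDerivAt_map_polynomial_eval (gaussianExpect σ) (F ^ n) s
  simp only [Polynomial.derivative_pow, Polynomial.eval_mul, Polynomial.eval_pow,
    algebraMap_eq, Polynomial.eval_C] at hderiv
  refine hderiv.congr_deriv ?_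
  rw [mul_assoc, ← map_natCast C, ← smul_eq_C_mul, map_smul, smul_eq_mul]

lemma numberOp_eval_C {F : Polynomial (MvPolynomial σ ℝ)} (hF : ∀ k, F.coeff k ∈ chaos σ k)
    (s : ℝ) : numberOp σ (F.eval (C s)) = C s * F.derivative.eval (C s) := by
  rw [Polynomial.eval_eq_sum, Polynomial.derivative_eval, Polynomial.sum, Polynomial.sum, map_sum,
    Finset.mul_sum]
  refine Finset.sum_congr rfl fun k _ => ?_
  rw [← map_pow, mul_comm _ (C _), ← smul_eq_C_mul, map_smul, (mem_chaos.1 (hF k)).2]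
  rcases k with _ | k
  · simp
  · simp only [smul_eq_C_mul, map_natCast, map_pow, Nat.add_sub_cancel]
    ring

lemma totalDegree_eval_C_le {F : Polynomial (MvPolynomial σ ℝ)}
    (hF : ∀ k, F.coeff k ∈ chaos σ k) (s : ℝ) :
    (F.eval (C s)).totalDegree ≤ F.natDegree := by
  rw [Polynomial.eval_eq_sum_range]
  refine totalDegree_finsetSum_le fun k hk => ?_
  rw [← map_pow, mul_comm, ← smul_eq_C_mul]
  exact (totalDegree_smul_le _ _).trans
    ((mem_chaos.1 (hF k)).1.trans (Nat.lt_succ_iff.1 (Finset.mem_range.1 hk)))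

lemma exists_chaos_polynomial {p : MvPolynomial σ ℝ} {d : ℕ} (hp : p.totalDegree ≤ d) :
    ∃ F : Polynomial (MvPolynomial σ ℝ), F.natDegree ≤ d ∧ (∀ k, F.coeff k ∈ chaos σ k) ∧
      F.eval 1 = p := by
  obtain ⟨c, hc, hsum⟩ := exists_sum_chaos hp
  refine ⟨∑ k ∈ Finset.range (d + 1), Polynomial.monomial k (c k), ?_, fun k => ?_, ?_⟩
  · refine Polynomial.natDegree_sum_le_of_forall_le _ _ fun k hk => ?_
    exact (Polynomial.natDegree_monomial_le _).trans (Nat.lt_succ_iff.1 (Finset.mem_range.1 hk))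
  · rw [Polynomial.finsetSum_coeff]
    refine sum_mem fun j _ => ?_
    rw [Polynomial.coeff_monomial]
    split_ifs with h
    · exact h ▸ hc j
    · exact zero_mem _
  · simpa [Polynomial.eval_finsetSum] using hsum

lemma sqrt_sub_sqrt_le_of_hasDerivAt_of_pos {Φ Ψ Φ' Ψ' : ℝ → ℝ} {a b : ℝ} (hab : a ≤ b)
    (hΦ : ContinuousOn Φ (Set.Icc a b)) (hΨ : ContinuousOn Ψ (Set.Icc a b))
    (hΦ_deriv : ∀ s ∈ Set.Ioo a b, HasDerivAt Φ (Φ' s) s)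
    (hΨ_deriv : ∀ s ∈ Set.Ioo a b, HasDerivAt Ψ (Ψ' s) s) (hΦ_pos : ∀ s ∈ Set.Ioo a b, 0 < Φ s)
    (hle : ∀ s ∈ Set.Ioo a b, Φ' s ≤ 2 * √(Φ s) * Ψ' s) :
    √(Φ b) - √(Φ a) ≤ Ψ b - Ψ a := by
  have hmono : MonotoneOn (fun s => Ψ s - √(Φ s)) (Set.Icc a b) := by
    refine monotoneOn_of_hasDerivWithinAt_nonneg (f' := fun s => Ψ' s - Φ' s / (2 * √(Φ s)))
      (convex_Icc a b) (hΨ.sub hΦ.sqrt) (fun s hs => ?_) fun s hs => ?_ <;>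
      rw [interior_Icc] at hs
    · exact ((hΨ_deriv s hs).sub ((hΦ_deriv s hs).sqrt (hΦ_pos s hs).ne')).hasDerivWithinAt
    · have hsqrt := Real.sqrt_pos.2 (hΦ_pos s hs)
      rw [sub_nonneg, div_le_iff₀ (by positivity), mul_comm]
      exact hle s hs
  have hends : Ψ a - √(Φ a) ≤ Ψ b - √(Φ b) :=
    hmono (Set.left_mem_Icc.2 hab) (Set.right_mem_Icc.2 hab) hab
  linarith

lemma sqrt_sub_sqrt_le_of_hasDerivAt {Φ Ψ Φ' Ψ' : ℝ → ℝ} {a b : ℝ} (hab : a ≤ b)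
    (hΦ : ContinuousOn Φ (Set.Icc a b)) (hΨ : ContinuousOn Ψ (Set.Icc a b))
    (hΦ_deriv : ∀ s ∈ Set.Ioo a b, HasDerivAt Φ (Φ' s) s)
    (hΨ_deriv : ∀ s ∈ Set.Ioo a b, HasDerivAt Ψ (Ψ' s) s)
    (hΦ_nonneg : ∀ s ∈ Set.Icc a b, 0 ≤ Φ s) (hΨ'_nonneg : ∀ s ∈ Set.Ioo a b, 0 ≤ Ψ' s)
    (hle : ∀ s ∈ Set.Ioo a b, Φ' s ≤ 2 * √(Φ s) * Ψ' s) :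
    √(Φ b) - √(Φ a) ≤ Ψ b - Ψ a := by
  -- `√Φ` need not be differentiable where `Φ` vanishes, so perturb `Φ` to `Φ + δ ^ 2`.
  refine le_of_forall_pos_le_add fun δ hδ => ?_
  have hpert := sqrt_sub_sqrt_le_of_hasDerivAt_of_pos (Φ := fun s => Φ s + δ ^ 2) hab
    (hΦ.add continuousOn_const) hΨ (fun s hs => (hΦ_deriv s hs).add_const _) hΨ_deriv
    (fun s hs =>
      add_pos_of_nonneg_of_pos (hΦ_nonneg s (Set.Ioo_subset_Icc_self hs)) (by positivity))
    fun s hs => (hle s hs).trans <| by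
      have := hΨ'_nonneg s hs
      gcongr
      exact le_add_of_nonneg_right (sq_nonneg δ)
  have hb_le : √(Φ b) ≤ √(Φ b + δ ^ 2) := Real.sqrt_le_sqrt (le_add_of_nonneg_right (sq_nonneg δ))
  have ha_le : √(Φ a + δ ^ 2) ≤ √(Φ a) + δ := by
    refine Real.sqrt_le_iff.2 ⟨by positivity, ?_⟩
    have := mul_nonneg (Real.sqrt_nonneg (Φ a)) hδ.le
    linarith [add_sq √(Φ a) δ, Real.sq_sqrt (hΦ_nonneg a (Set.left_mem_Icc.2 hab))]
  linarith

lemma integral_mul_le_sqrt_mul_sqrt {α : Type*} [MeasurableSpace α] {μ : Measure α} {f g : α → ℝ}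
    (hf : MemLp f 2 μ) (hg : MemLp g 2 μ) :
    ∫ x, f x * g x ∂μ ≤ √(∫ x, f x ^ 2 ∂μ) * √(∫ x, g x ^ 2 ∂μ) := by
  have hholder := integral_mul_norm_le_Lp_mul_Lq Real.HolderConjugate.two_two
    (by simpa using hf) (by simpa using hg)
  simp only [Real.rpow_two, Real.norm_eq_abs, sq_abs, ← Real.sqrt_eq_rpow] at hholder
  exact (integral_mono (hf.integrable_mul hg) (hf.norm.integrable_mul hg.norm)
    fun x => (le_abs_self _).trans_eq (abs_mul _ _)).trans hholder

lemma memLp_two_eval_gaussianPi (p : MvPolynomial σ ℝ) :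
    MemLp (fun x => eval x p) 2 (gaussianPi σ) :=
  (memLp_two_iff_integrable_sq (measurable_eval p).aestronglyMeasurable).2 <| by
    simp only [← map_pow]
    exact integrable_eval_gaussianPi _

lemma gaussianExpect_mul_le (p q : MvPolynomial σ ℝ) :
    gaussianExpect σ (p * q) ≤ √(gaussianExpect σ (p ^ 2)) * √(gaussianExpect σ (q ^ 2)) := by
  simpa only [gaussianExpect_apply, map_mul, map_pow] using
    integral_mul_le_sqrt_mul_sqrt (memLp_two_eval_gaussianPi p) (memLp_two_eval_gaussianPi q)

lemma gaussianExpect_sq_mul_sq_le (p q : MvPolynomial σ ℝ) :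
    gaussianExpect σ (p ^ 2 * q ^ 2) ≤
      √(gaussianExpect σ (p ^ 4)) * √(gaussianExpect σ (q ^ 4)) := by
  have hschwarz := gaussianExpect_mul_le (p ^ 2) (q ^ 2)
  rwa [← pow_mul, ← pow_mul] at hschwarz

lemma gaussianExpect_sq_nonneg (p : MvPolynomial σ ℝ) : 0 ≤ gaussianExpect σ (p ^ 2) :=
  integral_nonneg fun x => (sq_nonneg (eval x p)).trans_eq (map_pow _ _ _).symm

lemma gaussianExpect_mul_numberOp_self_nonneg (p : MvPolynomial σ ℝ) :
    0 ≤ gaussianExpect σ (p * numberOp σ p) := by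
  rw [gaussianExpect_mul_numberOp]
  exact Finset.sum_nonneg fun i _ => pow_two (pderiv i p) ▸ gaussianExpect_sq_nonneg _

lemma gaussianExpect_pow_three_mul_numberOp_le {p : MvPolynomial σ ℝ} {K : ℝ}
    (hK : ∀ i, √(gaussianExpect σ (pderiv i p ^ 4)) ≤ K * gaussianExpect σ (pderiv i p ^ 2)) :
    gaussianExpect σ (p ^ 3 * numberOp σ p) ≤
      3 * K * √(gaussianExpect σ (p ^ 4)) * gaussianExpect σ (p * numberOp σ p) := by
  rw [gaussianExpect_mul_numberOp, gaussianExpect_mul_numberOp, Finset.mul_sum]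
  refine Finset.sum_le_sum fun i _ => ?_
  calc gaussianExpect σ (pderiv i (p ^ 3) * pderiv i p)
      = 3 * gaussianExpect σ (p ^ 2 * pderiv i p ^ 2) := by
        rw [← smul_eq_mul 3, ← map_smul, smul_eq_C_mul, pderiv_pow]
        congr 1
        simp only [Nat.cast_ofNat, map_ofNat]
        ring
    _ ≤ 3 * (√(gaussianExpect σ (p ^ 4)) * √(gaussianExpect σ (pderiv i p ^ 4))) := by
        gcongr
        exact gaussianExpect_sq_mul_sq_le p _
    _ ≤ 3 * (√(gaussianExpect σ (p ^ 4)) * (K * gaussianExpect σ (pderiv i p ^ 2))) := by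
        gcongr
        exact hK i
    _ = 3 * K * √(gaussianExpect σ (p ^ 4)) * gaussianExpect σ (pderiv i p * pderiv i p) := by
        rw [pow_two]
        ring

lemma sqrt_gaussianExpect_eval_pow_four_sub_le {F : Polynomial (MvPolynomial σ ℝ)}
    (hF : ∀ k, F.coeff k ∈ chaos σ k) {K : ℝ} (hK : ∀ (s : ℝ) i,
      √(gaussianExpect σ (pderiv i (F.eval (C s)) ^ 4)) ≤
        K * gaussianExpect σ (pderiv i (F.eval (C s)) ^ 2)) (hK0 : 0 ≤ K) :
    √(gaussianExpect σ (F.eval 1 ^ 4)) - √(gaussianExpect σ (F.eval 0 ^ 4)) ≤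
      3 * K * gaussianExpect σ (F.eval 1 ^ 2) - 3 * K * gaussianExpect σ (F.eval 0 ^ 2) := by
  have hΦ := hasDerivAt_gaussianExpect_eval_pow F 4
  have hΨ (s : ℝ) := (hasDerivAt_gaussianExpect_eval_pow F 2 s).const_mul (3 * K)
  have hflow (s : ℝ) (q : MvPolynomial σ ℝ) : gaussianExpect σ (q * numberOp σ (F.eval (C s))) =
      s * gaussianExpect σ (q * F.derivative.eval (C s)) := by
    rw [numberOp_eval_C hF, mul_left_comm, ← smul_eq_C_mul, map_smul, smul_eq_mul]
  have hode := sqrt_sub_sqrt_le_of_hasDerivAt zero_le_one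
    (fun s _ => (hΦ s).continuousAt.continuousWithinAt)
    (fun s _ => (hΨ s).continuousAt.continuousWithinAt) (fun s _ => hΦ s) (fun s _ => hΨ s)
    (fun s _ => ?_) (fun s hs => ?_) (fun s hs => ?_)
  · simpa using hode
  · exact integral_nonneg fun x => by rw [map_pow]; positivity
  · have hnonneg := gaussianExpect_mul_numberOp_self_nonneg (F.eval (C s))
    rw [hflow, mul_nonneg_iff_of_pos_left hs.1] at hnonneg
    rw [Nat.add_one_sub_one, pow_one]
    positivity
  · have henergy := gaussianExpect_pow_three_mul_numberOp_le (hK s)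
    rw [hflow, hflow, mul_left_comm, mul_le_mul_iff_of_pos_left hs.1] at henergy
    simp only [Nat.reduceSub, Nat.cast_ofNat, pow_one]
    linarith

theorem sqrt_gaussianExpect_pow_four_le {p : MvPolynomial σ ℝ} {d : ℕ} (hp : p.totalDegree ≤ d) :
    √(gaussianExpect σ (p ^ 4)) ≤ 3 ^ d * gaussianExpect σ (p ^ 2) := by
  have hconst (a : ℝ) : √(gaussianExpect σ (C a ^ 4)) = gaussianExpect σ (C a ^ 2) := by
    rw [← map_pow, ← map_pow, gaussianExpect_C, gaussianExpect_C, show a ^ 4 = (a ^ 2) ^ 2 by ring,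
      Real.sqrt_sq (sq_nonneg a)]
  induction d generalizing p with
  | zero =>
    rw [totalDegree_eq_zero_iff_eq_C.1 (Nat.le_zero.1 hp), hconst, pow_zero, one_mul]
  | succ d ih =>
    obtain ⟨F, hFdeg, hF, rfl⟩ := exists_chaos_polynomial hp
    have hF0 : F.eval 0 = C (coeff 0 (F.coeff 0)) := by
      rw [← Polynomial.coeff_zero_eq_eval_zero]
      exact totalDegree_eq_zero_iff_eq_C.1 (Nat.le_zero.1 (mem_chaos.1 (hF 0)).1)
    have hpderiv (s : ℝ) (i : σ) : (pderiv i (F.eval (C s))).totalDegree ≤ d := by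
      have := totalDegree_pderiv_le i (F.eval (C s))
      have := totalDegree_eval_C_le hF s
      omega
    have hflow := sqrt_gaussianExpect_eval_pow_four_sub_le hF (fun s i => ih (hpderiv s i))
      (by positivity)
    rw [hF0, hconst, ← pow_succ', ← hF0] at hflow
    have := le_mul_of_one_le_left (gaussianExpect_sq_nonneg (F.eval 0))
      (one_le_pow₀ (n := d + 1) (by norm_num : (1 : ℝ) ≤ 3))
    linarith

lemma sq_setIntegral_sq_le {α : Type*} [MeasurableSpace α] {μ : Measure α} [IsFiniteMeasure μ]
    {g : α → ℝ} (hg : MemLp (fun x => g x ^ 2) 2 μ) (A : Set α) :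
    (∫ x in A, g x ^ 2 ∂μ) ^ 2 ≤ (∫ x, g x ^ 4 ∂μ) * μ.real A := by
  have hfourth : Integrable (fun x => g x ^ 4) μ := by
    simpa only [← pow_mul] using hg.integrable_sq
  have hschwarz := integral_mul_le_sqrt_mul_sqrt (hg.restrict A)
    (memLp_const (μ := μ.restrict A) (1 : ℝ))
  simp only [mul_one, one_pow, integral_const, measureReal_restrict_apply_univ, smul_eq_mul,
    ← pow_mul, Nat.reduceMul] at hschwarz
  have hnonneg : 0 ≤ ∫ x in A, g x ^ 4 ∂μ := by positivity
  calc (∫ x in A, g x ^ 2 ∂μ) ^ 2 ≤ (√(∫ x in A, g x ^ 4 ∂μ) * √(μ.real A)) ^ 2 := by gcongr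
    _ = (∫ x in A, g x ^ 4 ∂μ) * μ.real A := by
      rw [mul_pow, Real.sq_sqrt hnonneg, Real.sq_sqrt measureReal_nonneg]
    _ ≤ (∫ x, g x ^ 4 ∂μ) * μ.real A :=
      mul_le_mul_of_nonneg_right (setIntegral_le_integral hfourth
        (ae_of_all _ fun x => Even.pow_nonneg (by decide) (g x))) measureReal_nonneg

lemma mul_integral_sq_le_setIntegral_sq {α : Type*} [MeasurableSpace α] {μ : Measure α}
    {f g : α → ℝ} (hf : MemLp f 2 μ) (hg : MemLp g 2 μ) {ε κ : ℝ} (hκ : 0 < κ)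
    (hlt : √(∫ x, f x ^ 2 ∂μ) < ε * √(∫ x, g x ^ 2 ∂μ)) :
    (1 - (κ ^ 2)⁻¹) * ∫ x, g x ^ 2 ∂μ ≤ ∫ x in {x | |f x| < κ * ε * |g x|}, g x ^ 2 ∂μ := by
  set A := {x | |f x| < κ * ε * |g x|}
  have hε : 0 < ε := pos_of_mul_pos_left ((Real.sqrt_nonneg _).trans_lt hlt) (Real.sqrt_nonneg _)
  have hA : NullMeasurableSet A μ := nullMeasurableSet_lt hf.1.norm.aemeasurable
    (hg.1.norm.aemeasurable.const_mul _)
  have hcompl : (κ * ε) ^ 2 * ∫ x in Aᶜ, g x ^ 2 ∂μ ≤ ε ^ 2 * ∫ x, g x ^ 2 ∂μ :=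
    calc (κ * ε) ^ 2 * ∫ x in Aᶜ, g x ^ 2 ∂μ = ∫ x in Aᶜ, (κ * ε) ^ 2 * g x ^ 2 ∂μ :=
          (integral_const_mul _ _).symm
      _ ≤ ∫ x in Aᶜ, f x ^ 2 ∂μ := by
        refine setIntegral_mono_on₀ (hg.integrable_sq.const_mul _).integrableOn
          hf.integrable_sq.integrableOn hA.compl fun x hx => ?_
        rw [← mul_pow, sq_le_sq, abs_mul, abs_of_pos (mul_pos hκ hε)]
        exact not_lt.1 hx
      _ ≤ ∫ x, f x ^ 2 ∂μ := setIntegral_le_integral hf.integrable_sq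
        (ae_of_all _ fun x => sq_nonneg _)
      _ ≤ ε ^ 2 * ∫ x, g x ^ 2 ∂μ := by
        have hsq := Real.lt_sq_of_sqrt_lt hlt
        rw [mul_pow, Real.sq_sqrt (by positivity)] at hsq
        exact hsq.le
  rw [mul_pow, mul_right_comm, mul_comm, mul_le_mul_iff_of_pos_left (by positivity)] at hcompl
  rw [← integral_add_compl₀ hA hg.integrable_sq] at hcompl ⊢
  have hκ2 : 0 < κ ^ 2 := by positivity
  rw [one_sub_mul, inv_mul_eq_div, sub_le_comm, le_div_iff₀ hκ2]
  linarith

theorem inv_le_measureReal_abs_lt_mul_abs {α : Type*} [MeasurableSpace α] {μ : Measure α}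
    [IsFiniteMeasure μ] {f g : α → ℝ} (hf : MemLp f 2 μ) (hg : AEStronglyMeasurable g μ)
    (hg4 : Integrable (fun x => g x ^ 4) μ) {K : ℝ} (hK : 0 < K)
    (hgK : √(∫ x, g x ^ 4 ∂μ) ≤ K * ∫ x, g x ^ 2 ∂μ) {ε κ : ℝ} (hκ : √2 ≤ κ)
    (hlt : √(∫ x, f x ^ 2 ∂μ) < ε * √(∫ x, g x ^ 2 ∂μ)) :
    (4 * K ^ 2)⁻¹ ≤ μ.real {x | |f x| < κ * ε * |g x|} := by
  have hsq_memLp : MemLp (fun x => g x ^ 2) 2 μ :=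
    (memLp_two_iff_integrable_sq (hg.pow 2)).2 (by simpa only [Pi.pow_apply, ← pow_mul] using hg4)
  have hκ_pos : 0 < κ := (Real.sqrt_pos.2 two_pos).trans_le hκ
  have hκ_inv : (κ ^ 2)⁻¹ ≤ 2⁻¹ := inv_anti₀ two_pos ((Real.sqrt_le_left hκ_pos.le).1 hκ)
  have hlower := mul_integral_sq_le_setIntegral_sq hf
    ((memLp_two_iff_integrable_sq hg).2 (hsq_memLp.integrable one_le_two)) hκ_pos hlt
  set A := {x | |f x| < κ * ε * |g x|}
  set S := ∫ x, g x ^ 2 ∂μ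
  have hS : 0 < S := by
    by_contra! hS
    rw [Real.sqrt_eq_zero_of_nonpos hS, mul_zero] at hlt
    exact hlt.not_ge (Real.sqrt_nonneg _)
  have hbound : 2⁻¹ ^ 2 * S ^ 2 ≤ K ^ 2 * μ.real A * S ^ 2 :=
    calc 2⁻¹ ^ 2 * S ^ 2 = (2⁻¹ * S) ^ 2 := (mul_pow _ _ _).symm
      _ ≤ ((1 - (κ ^ 2)⁻¹) * S) ^ 2 := by gcongr; linarith
      _ ≤ (∫ x in A, g x ^ 2 ∂μ) ^ 2 := by
        gcongr
        exact mul_nonneg (by linarith) hS.le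
      _ ≤ (∫ x, g x ^ 4 ∂μ) * μ.real A := sq_setIntegral_sq_le hsq_memLp A
      _ ≤ (K * S) ^ 2 * μ.real A := by
        gcongr
        exact (Real.sqrt_le_left (by positivity)).1 hgK
      _ = K ^ 2 * μ.real A * S ^ 2 := by ring
  have := le_of_mul_le_mul_right hbound (by positivity)
  rw [inv_le_iff_one_le_mul₀ (by positivity)]
  linarith

lemma mul_measure_le_measure_prod {α β : Type*} [MeasurableSpace α] [MeasurableSpace β]
    {μ : Measure α} {ν : Measure β} [SFinite μ] [SFinite ν] {A : Set (α × β)}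
    (hA : MeasurableSet A) {B : Set β} {c : ENNReal}
    (hB : ∀ y ∈ B, c ≤ μ ((fun x => (x, y)) ⁻¹' A)) : c * ν B ≤ μ.prod ν A :=
  calc c * ν B ≤ c * ν {y | c ≤ μ ((fun x => (x, y)) ⁻¹' A)} := by gcongr; exact hB
    _ ≤ ∫⁻ y, μ ((fun x => (x, y)) ⁻¹' A) ∂ν :=
      mul_meas_ge_le_lintegral (measurable_measure_prodMk_right hA) c
    _ = μ.prod ν A := (Measure.prod_apply_symm hA).symm

lemma measurable_eval_sumElim {σ τ : Type*} (r : MvPolynomial (σ ⊕ τ) ℝ) :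
    Measurable fun XY : (σ → ℝ) × (τ → ℝ) => eval (Sum.elim XY.1 XY.2) r := by
  refine (measurable_eval r).comp (measurable_pi_lambda _ fun i => ?_)
  rcases i with i | i
  · exact (measurable_pi_apply i).comp measurable_fst
  · exact (measurable_pi_apply i).comp measurable_snd

/-- The polynomial `r(·, Y)` in the first group of variables. -/
noncomputable def freeze {σ τ : Type*} (Y : τ → ℝ) (r : MvPolynomial (σ ⊕ τ) ℝ) :
    MvPolynomial σ ℝ :=
  bind₁ (Sum.elim X (C ∘ Y)) r

lemma eval_freeze {σ τ : Type*} (X : σ → ℝ) (Y : τ → ℝ) (r : MvPolynomial (σ ⊕ τ) ℝ) :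
    eval X (freeze Y r) = eval (Sum.elim X Y) r := by
  rw [freeze, eval, eval₂Hom_bind₁]
  congr 2 with i
  cases i <;> simp

lemma totalDegree_freeze_le {σ τ : Type*} (Y : τ → ℝ) (r : MvPolynomial (σ ⊕ τ) ℝ) :
    (freeze Y r).totalDegree ≤ r.totalDegree := by
  rw [freeze, ← aeval_eq_bind₁, aeval_def, eval₂_eq]
  refine totalDegree_finsetSum_le fun s hs => ?_
  have hvar (i : σ ⊕ τ) : (Sum.elim X (C ∘ Y) i : MvPolynomial σ ℝ).totalDegree ≤ 1 := by
    cases i <;> simp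
  calc _ ≤ (algebraMap ℝ (MvPolynomial σ ℝ) (coeff s r)).totalDegree
          + (∏ i ∈ s.support, Sum.elim X (C ∘ Y) i ^ s i).totalDegree := totalDegree_mul _ _
    _ ≤ 0 + ∑ i ∈ s.support, s i * 1 := by
      gcongr
      · rw [algebraMap_eq, totalDegree_C]
      · refine (totalDegree_finsetProd _ _).trans (Finset.sum_le_sum fun i _ => ?_)
        exact (totalDegree_pow _ _).trans (Nat.mul_le_mul_left _ (hvar i))
    _ ≤ r.totalDegree := by simpa using! le_totalDegree hs

lemma memLp_two_eval_sumElim {τ : Type*} (p : MvPolynomial (σ ⊕ τ) ℝ) (Y : τ → ℝ) :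
    MemLp (fun X => eval (Sum.elim X Y) p) 2 (gaussianPi σ) := by
  simpa only [eval_freeze] using memLp_two_eval_gaussianPi (freeze Y p)

theorem inv_le_measureReal_abs_lt_mul_abs_eval {f : (σ → ℝ) → ℝ} (hf : MemLp f 2 (gaussianPi σ))
    {q : MvPolynomial σ ℝ} {d : ℕ} (hq : q.totalDegree ≤ d) {ε κ : ℝ} (hκ : √2 ≤ κ)
    (hlt : √(∫ x, f x ^ 2 ∂gaussianPi σ) < ε * √(∫ x, eval x q ^ 2 ∂gaussianPi σ)) :
    (4 * 9 ^ d)⁻¹ ≤ (gaussianPi σ).real {x | |f x| < κ * ε * |eval x q|} := by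
  have hfourth := integrable_eval_gaussianPi (q ^ 4)
  have hhyper := sqrt_gaussianExpect_pow_four_le hq
  simp only [gaussianExpect_apply, map_pow] at hfourth hhyper
  rw [show (9 : ℝ) ^ d = (3 ^ d) ^ 2 by rw [← pow_mul', pow_mul]; norm_num]
  exact inv_le_measureReal_abs_lt_mul_abs hf (measurable_eval q).aestronglyMeasurable hfourth
    (by positivity) hhyper hκ hlt

theorem stmt5_general {τ : Type*} {ν : Measure (τ → ℝ)} [IsFiniteMeasure ν]
    {f : (σ → ℝ) × (τ → ℝ) → ℝ} (hf : Measurable f)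
    (hf_memLp : ∀ Y, MemLp (fun X => f (X, Y)) 2 (gaussianPi σ)) {q : MvPolynomial (σ ⊕ τ) ℝ}
    {d : ℕ} (hq : ∀ Y, (freeze Y q).totalDegree ≤ d) (ε : ℝ) {κ : ℝ} (hκ : √2 ≤ κ) :
    ν.real {Y | √(∫ X, f (X, Y) ^ 2 ∂gaussianPi σ) <
        ε * √(∫ X, eval (Sum.elim X Y) q ^ 2 ∂gaussianPi σ)} ≤
      4 * 9 ^ d * ((gaussianPi σ).prod ν).real
        {XY | |f XY| < κ * ε * |eval (Sum.elim XY.1 XY.2) q|} := by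
  have hA : MeasurableSet {XY | |f XY| < κ * ε * |eval (Sum.elim XY.1 XY.2) q|} :=
    measurableSet_lt hf.abs ((measurable_eval_sumElim q).abs.const_mul _)
  have hfiber (Y : τ → ℝ) (hY : √(∫ X, f (X, Y) ^ 2 ∂gaussianPi σ) <
      ε * √(∫ X, eval (Sum.elim X Y) q ^ 2 ∂gaussianPi σ)) :
      ENNReal.ofReal (4 * 9 ^ d)⁻¹ ≤
        gaussianPi σ {X | |f (X, Y)| < κ * ε * |eval (Sum.elim X Y) q|} := by
    simp only [← eval_freeze] at hY ⊢
    exact ENNReal.ofReal_le_of_le_toReal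
      (inv_le_measureReal_abs_lt_mul_abs_eval (hf_memLp Y) (hq Y) hκ hY)
  have hmarkov := ENNReal.toReal_mono (measure_ne_top _ _)
    (mul_measure_le_measure_prod (ν := ν) hA hfiber)
  rwa [ENNReal.toReal_mul, ENNReal.toReal_ofReal (by positivity), inv_mul_le_iff₀ (by positivity)]
    at hmarkov

/-- Comparing anticoncentration of partial `L²` norms with pointwise values. -/
theorem stmt5 (n₁ n₂ d : ℕ) (p q : MvPolynomial (Fin n₁ ⊕ Fin n₂) ℝ)
    (hp : p.totalDegree ≤ d) (hq : q.totalDegree ≤ d) (ε : ℝ) (hε : 0 < ε) :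
    ((stdGaussian n₂) {Y | partialL2 n₁ n₂ p Y < ε * partialL2 n₁ n₂ q Y}).toReal ≤
      4 * 9 ^ d *
        (((stdGaussian n₁).prod (stdGaussian n₂))
          {XY | |MvPolynomial.eval (Sum.elim XY.1 XY.2) p| <
                4 * 3 ^ d * ε * |MvPolynomial.eval (Sum.elim XY.1 XY.2) q|}).toReal := by
  have hκ : √2 ≤ 4 * 3 ^ d := Real.sqrt_le_iff.2
    ⟨by positivity, by nlinarith [one_le_pow₀ (n := d) (by norm_num : (1 : ℝ) ≤ 3)]⟩
  exact stmt5_general (ν := gaussianPi (Fin n₂)) (measurable_eval_sumElim p)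
    (memLp_two_eval_sumElim p) (fun Y => (totalDegree_freeze_le Y q).trans hq) ε hκ
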